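/- (Random rotation flattens an incoherent basis.) Let Y ∈ ℝ^{n×k} be an orthonormal matrix with coherence μ(Y) ≤ μ, and let O ∈ ℝ^{k×k} be a Haar-random orthogonal matrix. Then Pr{ max_{i∈[n], j∈[k]} |(YO)_{ij}| > √(8μ log(n)/n) } ≤ 1/n². -/

import Mathlib

/-!
Let `yᵢ` be the `i`-th row of `Y`, so that `‖yᵢ‖² ≤ μ k / n`, and let `u` be the `j`-th column of `O`.
Then `(Y O)ᵢⱼ = ⟪yᵢ, u⟫`, where `u` has a rotation-invariant law on the unit sphere of `ℝᵏ`. With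
`t² = 8 log n / k`, exceeding the threshold forces `|⟪yᵢ, u⟫| > t ‖yᵢ‖`, so the theorem reduces to the
spherical cap bound `P (|⟪y, u⟫| > t ‖y‖) ≤ (1 - t²)^((k - 1) / 2)` for `t < 1` (`cap_le`); for
`t ≥ 1` the event is null by Cauchy-Schwarz.

The cap probability does not depend on `y ≠ 0`, so `y` may be replaced by an independent standard
Gaussian `g`, and after conditioning on `u` and rotating it equals `P (|g₀| > t ‖g‖)`. Conditioning on
the remaining coordinates, the tail bound `P (|Z| > s) ≤ exp (-s² / 2)` (`gaussianReal_tail`) and the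
Gaussian integral of `exp (-a z² / 2)` give the stated value (`stdGaussian_cap`).

When `8 log n < k` the cap bound is at most `exp (-4 log n) = n⁻⁴` (`sqrt_one_sub_pow_le`), and a union
bound over the `n k ≤ n²` entries gives `n⁻²`. The constant in front of the exponential has to be `1`,
since `k` may be as large as `n`.
-/

open Matrix MeasureTheory

instance matrixMeasurableSpace {m n : Type*} : MeasurableSpace (Matrix m n ℝ) :=
  show MeasurableSpace (m → n → ℝ) from inferInstance

/-- The coherence `μ(X) = max_i (n/m) ‖e_iᵀ X‖²` of an `n × m` matrix. -/
noncomputable def coher {n : ℕ} {m : Type*} [Fintype m] (X : Matrix (Fin n) m ℝ) : ℝ :=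
  ⨆ i : Fin n, ((n : ℝ) / (Fintype.card m)) * ∑ j, (X i j)^2

/-- `ν` is the Haar probability measure on the orthogonal group `O(k)`, viewed as a
measure on `k × k` matrices: it is a probability measure carried by the orthogonal
matrices and invariant under left translation by any orthogonal matrix. -/
structure IsHaarOrthogonal {k : ℕ} (ν : Measure (Matrix (Fin k) (Fin k) ℝ)) : Prop where
  prob : IsProbabilityMeasure ν
  orth : ∀ᵐ O ∂ν, Oᵀ * O = 1
  left_invariant : ∀ Q : Matrix (Fin k) (Fin k) ℝ, Qᵀ * Q = 1 →
    Measure.map (fun O => Q * O) ν = ν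

open ProbabilityTheory Real
open scoped RealInnerProductSpace NNReal ENNReal

/-- If the density of `N(m, 1)` is at most `exp c` times that of `N(0, 1)` on `S`, the same comparison
holds for the measures of `S`. -/
lemma gaussianReal_apply_le (m c : ℝ) (S : Set ℝ) (hS : MeasurableSet S)
    (h : ∀ x ∈ S, -(x - m) ^ 2 / 2 ≤ c + -x ^ 2 / 2) :
    gaussianReal m 1 S ≤ ENNReal.ofReal (exp c) * gaussianReal 0 1 S := by
  rw [gaussianReal_apply _ one_ne_zero, gaussianReal_apply _ one_ne_zero,
    ← lintegral_const_mul _ (measurable_gaussianPDF 0 1)]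
  refine setLIntegral_mono' hS fun x hx => ?_
  rw [gaussianPDF, gaussianPDF, ← ENNReal.ofReal_mul (exp_pos c).le]
  refine ENNReal.ofReal_le_ofReal ?_
  have := exp_le_exp.2 (h x hx)
  rw [exp_add] at this
  simp only [gaussianPDFReal, NNReal.coe_one, mul_one, sub_zero]
  rw [mul_left_comm]
  gcongr

/-- Two-sided Gaussian tail bound with constant `1` (not `2`). Shifting by `±s` turns each tail into a
half-line integral with an extra factor at most `exp (-s ^ 2 / 2)`, and the two half-lines have total
mass at most `1`. The constant matters: a factor `2` would not survive the union bound. -/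
lemma gaussianReal_tail (s : ℝ) (hs : 0 ≤ s) :
    gaussianReal 0 1 {z | s < |z|} ≤ ENNReal.ofReal (exp (-s ^ 2 / 2)) := by
  have h1 : gaussianReal 0 1 (Set.Ioi s) ≤
      ENNReal.ofReal (exp (-s ^ 2 / 2)) * gaussianReal 0 1 (Set.Ioi 0) := by
    have e : gaussianReal 0 1 (Set.Ioi s) = gaussianReal (-s) 1 (Set.Ioi 0) := by
      have := gaussianReal_map_add_const (μ := 0) (v := 1) (-s)
      rw [zero_add] at this
      rw [← this, Measure.map_apply (by fun_prop) measurableSet_Ioi]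
      congr 1; ext x; simp
    rw [e]
    refine gaussianReal_apply_le _ _ _ measurableSet_Ioi fun x hx => ?_
    have := mul_nonneg hs (le_of_lt (Set.mem_Ioi.1 hx))
    nlinarith
  have h2 : gaussianReal 0 1 (Set.Iio (-s)) ≤
      ENNReal.ofReal (exp (-s ^ 2 / 2)) * gaussianReal 0 1 (Set.Iio 0) := by
    have e : gaussianReal 0 1 (Set.Iio (-s)) = gaussianReal s 1 (Set.Iio 0) := by
      have := gaussianReal_map_add_const (μ := 0) (v := 1) s
      rw [zero_add] at this
      rw [← this, Measure.map_apply (by fun_prop) measurableSet_Iio]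
      congr 1; ext x; simp [lt_neg_iff_add_neg]
    rw [e]
    refine gaussianReal_apply_le _ _ _ measurableSet_Iio fun x hx => ?_
    have := mul_nonneg hs (neg_nonneg.2 (le_of_lt (Set.mem_Iio.1 hx)))
    nlinarith
  have hd : Disjoint (Set.Ioi (0 : ℝ)) (Set.Iio 0) := by
    rw [Set.disjoint_left]; intro x hx hx'
    exact lt_asymm (Set.mem_Ioi.1 hx) (Set.mem_Iio.1 hx')
  calc gaussianReal 0 1 {z | s < |z|}
      ≤ gaussianReal 0 1 (Set.Ioi s ∪ Set.Iio (-s)) := by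
        refine measure_mono fun z hz => ?_
        rcases lt_abs.1 (show s < |z| from hz) with h | h
        · exact Or.inl h
        · exact Or.inr (show z < -s by linarith)
    _ ≤ _ := measure_union_le _ _
    _ ≤ _ := add_le_add h1 h2
    _ = ENNReal.ofReal (exp (-s ^ 2 / 2)) * gaussianReal 0 1 (Set.Ioi 0 ∪ Set.Iio 0) := by
        rw [measure_union hd measurableSet_Iio, mul_add]
    _ ≤ ENNReal.ofReal (exp (-s ^ 2 / 2)) * 1 := by gcongr; exact prob_le_one
    _ = _ := mul_one _

lemma integral_exp_neg_sq (a : ℝ) (ha : 0 ≤ a) :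
    ∫ z, exp (-(a / 2) * z ^ 2) ∂(gaussianReal 0 1) = (√(1 + a))⁻¹ := by
  rw [integral_gaussianReal_eq_integral_smul one_ne_zero]
  have : ∀ x : ℝ, gaussianPDFReal 0 1 x • exp (-(a / 2) * x ^ 2) =
      (√(2 * π))⁻¹ * exp (-((1 + a) / 2) * x ^ 2) := fun x => by
    simp only [gaussianPDFReal, NNReal.coe_one, mul_one, sub_zero, smul_eq_mul]
    rw [mul_assoc, ← exp_add]
    ring_nf
  simp_rw [this]
  rw [integral_const_mul, integral_gaussian, ← sqrt_inv, ← sqrt_inv, ← sqrt_mul (by positivity)]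
  congr 1
  have := pi_pos
  field_simp

lemma lintegral_exp_neg_sq (m : ℕ) (a : ℝ) (ha : 0 ≤ a) :
    ∫⁻ y : Fin m → ℝ, ENNReal.ofReal (exp (-(a / 2) * ∑ i, y i ^ 2))
      ∂(Measure.pi fun _ => gaussianReal 0 1) = ENNReal.ofReal ((√(1 + a))⁻¹ ^ m) := by
  rw [← ofReal_integral_eq_lintegral_ofReal]
  · congr 1
    simp_rw [Finset.mul_sum, exp_sum]
    rw [integral_fintype_prod_eq_prod (f := fun _ z => exp (-(a / 2) * z ^ 2))]
    simp only [integral_exp_neg_sq a ha, Finset.prod_const, Finset.card_univ, Fintype.card_fin]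
  · refine Integrable.of_bound (Continuous.aestronglyMeasurable (by fun_prop)) 1 (Filter.Eventually.of_forall fun y => ?_)
    rw [norm_of_nonneg (exp_pos _).le, exp_le_one_iff]
    have : 0 ≤ ∑ i, y i ^ 2 := Finset.sum_nonneg fun i _ => sq_nonneg _
    nlinarith
  · exact Filter.Eventually.of_forall fun y => (exp_pos _).le

/-- For `g` standard Gaussian in dimension `m + 1`, the event `t ‖g‖ < |g₀|` says
`a (g₁² + ⋯ + gₘ²) < g₀²` with `a = t² / (1 - t²)`. Conditioning on `g₁, …, gₘ`, the Gaussian tail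
bound and `E exp (-a gᵢ² / 2) = (1 + a)^(-1/2) = √(1 - t²)` give the estimate. -/
lemma stdGaussian_cap (m : ℕ) (t : ℝ) (ht : 0 ≤ t) (ht1 : t < 1) :
    stdGaussian (EuclideanSpace ℝ (Fin (m + 1))) {x | t * ‖x‖ < |x 0|} ≤
      ENNReal.ofReal (√(1 - t ^ 2) ^ m) := by
  have hpos : 0 < 1 - t ^ 2 := by nlinarith
  set a : ℝ := t ^ 2 / (1 - t ^ 2) with ha_def
  have ha : 0 ≤ a := by positivity
  have ha1 : 1 + a = (1 - t ^ 2)⁻¹ := by rw [ha_def]; field_simp; ring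
  have hmeas : MeasurableSet {x : EuclideanSpace ℝ (Fin (m + 1)) | t * ‖x‖ < |x 0|} :=
    measurableSet_lt (by fun_prop) (by fun_prop)
  rw [← map_pi_eq_stdGaussian, Measure.map_apply (by fun_prop) hmeas,
    ← ((measurePreserving_piFinSuccAbove
      (fun _ : Fin (m + 1) => gaussianReal 0 1) 0).symm).measure_preimage
      ((hmeas.preimage (by fun_prop)).nullMeasurableSet)]
  rw [Measure.prod_apply_symm]
  rotate_left
  · exact (hmeas.preimage (by fun_prop)).preimage (MeasurableEquiv.measurable _)
  calc _ ≤ ∫⁻ y : Fin m → ℝ, ENNReal.ofReal (exp (-(a / 2) * ∑ i, y i ^ 2))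
      ∂(Measure.pi fun _ => gaussianReal 0 1) := ?_
    _ = _ := by rw [lintegral_exp_neg_sq m a ha, ha1, sqrt_inv, inv_inv]
  refine lintegral_mono fun y => ?_
  have hR : 0 ≤ ∑ i, y i ^ 2 := Finset.sum_nonneg fun i _ => sq_nonneg _
  have := gaussianReal_tail (√(a * ∑ i, y i ^ 2)) (sqrt_nonneg _)
  rw [sq_sqrt (by positivity)] at this
  refine le_trans (measure_mono ?_) (this.trans (le_of_eq ?_))
  · intro z hz
    have hz' : t * √(z ^ 2 + ∑ i, y i ^ 2) < |z| := by
      simpa [EuclideanSpace.norm_eq, Fin.sum_univ_succ, Fin.insertNthEquiv] using hz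
    have h2 := pow_lt_pow_left₀ hz' (by positivity) two_ne_zero
    rw [mul_pow, sq_sqrt (by positivity), sq_abs] at h2
    show √(a * ∑ i, y i ^ 2) < |z|
    rw [sqrt_lt' (lt_of_le_of_lt (by positivity) hz'), sq_abs, ha_def, div_mul_eq_mul_div,
      div_lt_iff₀ hpos]
    linarith
  · congr 2; ring

/-- Linear isometries act transitively on spheres: a reflection exchanges two vectors of equal norm. -/
lemma exists_isometry {E : Type*} [NormedAddCommGroup E] [InnerProductSpace ℝ E]
    [FiniteDimensional ℝ E] {v w : E} (h : ‖v‖ = ‖w‖) : ∃ T : E ≃ₗᵢ[ℝ] E, T v = w :=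
  ⟨_, Submodule.reflection_sub h⟩

/-- Cap bound for a rotation-invariant law `ρ` on the unit sphere. No uniqueness of that law is needed:
the probability of the cap around `x` is the same for all `x ≠ 0`, so it may be averaged over a Gaussian
`x`; by Fubini one may instead fix `u` and use the randomness of `x` (`stdGaussian_cap`). -/
lemma cap_le (m : ℕ) (ρ : Measure (EuclideanSpace ℝ (Fin (m + 1)))) [IsProbabilityMeasure ρ]
    (hunit : ∀ᵐ u ∂ρ, ‖u‖ = 1)
    (hinv : ∀ T : EuclideanSpace ℝ (Fin (m + 1)) ≃ₗᵢ[ℝ] EuclideanSpace ℝ (Fin (m + 1)),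
      ρ.map T = ρ)
    (t : ℝ) (ht : 0 ≤ t) (ht1 : t < 1) (x : EuclideanSpace ℝ (Fin (m + 1))) (hx : x ≠ 0) :
    ρ {u | t * ‖x‖ < |⟪x, u⟫|} ≤ ENNReal.ofReal (√(1 - t ^ 2) ^ m) := by
  let E := EuclideanSpace ℝ (Fin (m + 1))
  have hmeasA : MeasurableSet {p : E × E | t * ‖p.1‖ < |⟪p.1, p.2⟫|} :=
    measurableSet_lt (by fun_prop) (by fun_prop)
  -- the probability in question does not depend on `x ≠ 0`
  have hconst : ∀ y : E, y ≠ 0 →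
      ρ {u | t * ‖y‖ < |⟪y, u⟫|} = ρ {u | t * ‖x‖ < |⟪x, u⟫|} := by
    intro y hy
    have hy' := norm_pos_iff.2 hy
    have hx' := norm_pos_iff.2 hx
    obtain ⟨T, hT⟩ := exists_isometry (v := (‖x‖ / ‖y‖) • y) (w := x) (by
      rw [norm_smul, norm_of_nonneg (by positivity)]; field_simp)
    conv_rhs => rw [← hinv T]
    rw [Measure.map_apply T.continuous.measurable
      (measurableSet_lt (by fun_prop) (by fun_prop))]
    congr 1
    ext u
    simp only [Set.mem_ofPred_eq, Set.mem_preimage]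
    have : ⟪x, T u⟫ = (‖x‖ / ‖y‖) * ⟪y, u⟫ := by
      conv_lhs => rw [← hT]
      rw [T.inner_map_map, real_inner_smul_left]
    rw [this, abs_mul, abs_of_pos (show 0 < ‖x‖ / ‖y‖ by positivity), div_mul_eq_mul_div,
      lt_div_iff₀ hy']
    constructor
    · intro h; nlinarith
    · intro h; nlinarith
  have hcap : ∀ u : E, ‖u‖ = 1 → stdGaussian E {y | t * ‖y‖ < |⟪y, u⟫|} ≤
      ENNReal.ofReal (√(1 - t ^ 2) ^ m) := by
    intro u hu
    obtain ⟨T, hT⟩ := exists_isometry (v := EuclideanSpace.single (0 : Fin (m + 1)) (1 : ℝ))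
      (w := u) (by simp [hu])
    refine le_trans (le_of_eq ?_) (stdGaussian_cap m t ht ht1)
    conv_lhs => rw [← stdGaussian_map T]
    rw [Measure.map_apply T.continuous.measurable
      (measurableSet_lt (by fun_prop) (by fun_prop))]
    congr 1
    ext y
    simp only [Set.mem_ofPred_eq, Set.mem_preimage]
    rw [← hT, T.inner_map_map, T.norm_map]
    simp [EuclideanSpace.inner_single_right]
  have h0 : ∀ᵐ y ∂(stdGaussian E), y ≠ 0 := by
    rw [← map_pi_eq_stdGaussian,
      ae_map_iff (p := fun y : E => y ≠ 0) (by fun_prop) (measurableSet_singleton 0).compl]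
    have := nullSingletonClass_gaussianReal (μ := 0) (v := 1) one_ne_zero
    have h1 : ∀ᵐ z ∂(gaussianReal 0 1), z ≠ 0 := by
      simp [ae_iff]
    filter_upwards [(measurePreserving_eval (fun _ : Fin (m + 1) => gaussianReal 0 1)
      0).quasiMeasurePreserving.ae h1] with y hy h
    exact hy (by simpa using congrArg (fun v : E => v 0) h)
  calc ρ {u | t * ‖x‖ < |⟪x, u⟫|}
      = ∫⁻ _y : E, ρ {u | t * ‖x‖ < |⟪x, u⟫|} ∂(stdGaussian E) := by simp
    _ = ∫⁻ y : E, ρ {u | t * ‖y‖ < |⟪y, u⟫|} ∂(stdGaussian E) := by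
        refine lintegral_congr_ae ?_
        filter_upwards [h0] with y hy using (hconst y hy).symm
    _ = ((stdGaussian E).prod ρ) {p : E × E | t * ‖p.1‖ < |⟪p.1, p.2⟫|} :=
        (Measure.prod_apply hmeasA).symm
    _ = ∫⁻ u : E, stdGaussian E {y | t * ‖y‖ < |⟪y, u⟫|} ∂ρ := Measure.prod_apply_symm hmeasA
    _ ≤ ∫⁻ _u : E, ENNReal.ofReal (√(1 - t ^ 2) ^ m) ∂ρ := by
        refine lintegral_mono_ae ?_
        filter_upwards [hunit] with u hu using hcap u hu
    _ = _ := by rw [lintegral_const, measure_univ, mul_one]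

/-- The `j`-th column of a matrix, as a Euclidean vector. -/
noncomputable def euclideanCol {k : ℕ} (j : Fin k) (O : Matrix (Fin k) (Fin k) ℝ) :
    EuclideanSpace ℝ (Fin k) :=
  WithLp.toLp 2 fun l => O l j

lemma measurable_euclideanCol {k : ℕ} (j : Fin k) : Measurable (euclideanCol j) := by
  have h : Measurable fun (O : Fin k → Fin k → ℝ) (l : Fin k) => O l j := by fun_prop
  exact (show Measurable (WithLp.toLp 2 : (Fin k → ℝ) → _) by fun_prop).comp h

lemma measurable_mul_left {k : ℕ} (Q : Matrix (Fin k) (Fin k) ℝ) :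
    Measurable fun O : Matrix (Fin k) (Fin k) ℝ => Q * O := by
  have h : Measurable fun (O : Fin k → Fin k → ℝ) (i j : Fin k) => ∑ l, Q i l * O l j := by
    fun_prop
  exact h

lemma norm_euclideanCol {k : ℕ} (j : Fin k) (O : Matrix (Fin k) (Fin k) ℝ) (hO : Oᵀ * O = 1) :
    ‖euclideanCol j O‖ = 1 := by
  have h := congrFun (congrFun hO j) j
  rw [Matrix.mul_apply, Matrix.one_apply_eq] at h
  rw [EuclideanSpace.norm_eq, sqrt_eq_one, ← h]
  refine Finset.sum_congr rfl fun l _ => ?_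
  rw [norm_eq_abs, sq_abs, sq]; rfl

/-- The law of a column of a Haar orthogonal matrix is rotation invariant. -/
lemma map_euclideanCol_invariant {k : ℕ} (ν : Measure (Matrix (Fin k) (Fin k) ℝ))
    (hν : IsHaarOrthogonal ν) (j : Fin k)
    (T : EuclideanSpace ℝ (Fin k) ≃ₗᵢ[ℝ] EuclideanSpace ℝ (Fin k)) :
    (ν.map (euclideanCol j)).map T = ν.map (euclideanCol j) := by
  let b := EuclideanSpace.basisFun (Fin k) ℝ
  let Q : Matrix (Fin k) (Fin k) ℝ := LinearMap.toMatrix b.toBasis b.toBasis T.toLinearMap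
  have hQ : Qᵀ * Q = 1 := (T.toMatrix_mem_unitaryGroup b b).1
  have hcol : ∀ O, T (euclideanCol j O) = euclideanCol j (Q * O) := fun O => by
    have := LinearMap.toMatrix_mulVec_repr b.toBasis b.toBasis T.toLinearMap (euclideanCol j O)
    ext l
    have h2 := congrFun this l
    simpa [b, euclideanCol, Matrix.mul_apply, Matrix.mulVec, dotProduct] using h2.symm
  conv_rhs => rw [← hν.left_invariant Q hQ]
  rw [Measure.map_map T.continuous.measurable (measurable_euclideanCol j),
    Measure.map_map (measurable_euclideanCol j) (measurable_mul_left Q)]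
  congr 1
  exact funext hcol

/-- With `L ≥ log 2` and `x = 8 L / (m + 1) < 1`, the cap bound `(1 - x)^(m/2)` is at most `exp (-4 L)`. The exponent
`m` instead of `m + 1` is absorbed by the quadratic term of `log (1 - x) ≤ -x - x² / 2`. -/
lemma sqrt_one_sub_pow_le (m : ℕ) (L x : ℝ) (hL : log 2 ≤ L) (hx : x = 8 * L / (m + 1 : ℕ))
    (hx1 : x < 1) : √(1 - x) ^ m ≤ exp (-(4 * L)) := by
  have hl2 := log_two_gt_d9
  have hLpos : 0 < L := by linarith
  have hx0 : 0 < x := by rw [hx]; positivity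
  have hmx : (m + 1 : ℝ) * x = 8 * L := by rw [hx]; push_cast; field_simp
  have hlog : log (1 - x) ≤ -x - x ^ 2 / 2 := by
    have h := sum_le_hasSum (Finset.range 2) (fun i _ => by positivity)
      (hasSum_pow_div_log_of_abs_lt_one (x := x) (by rwa [abs_of_pos hx0]))
    norm_num [Finset.sum_range_succ] at h
    linarith
  rw [← log_le_iff_le_exp (pow_pos (sqrt_pos.2 (by linarith)) _), log_pow, log_sqrt (by linarith)]
  have hm : (0 : ℝ) ≤ m := Nat.cast_nonneg m
  nlinarith [mul_le_mul_of_nonneg_left hlog hm]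

lemma card_le_of_orthonormal {n k : ℕ} (Y : Matrix (Fin n) (Fin k) ℝ) (hY : Yᵀ * Y = 1) :
    k ≤ n := by
  have h := Matrix.rank_mul_le_right Yᵀ Y
  rw [hY, Matrix.rank_one, Fintype.card_fin] at h
  exact h.trans (by simpa using Y.rank_le_height)

/-- A single entry of `Y * O` exceeds the threshold with probability at most `n⁻⁴`, for `n ≥ 2`. -/
lemma entry_tail {n k : ℕ} (hn : 2 ≤ n) (Y : Matrix (Fin n) (Fin k) ℝ)
    (μc : ℝ) (hμ : coher Y ≤ μc)
    (ν : Measure (Matrix (Fin k) (Fin k) ℝ)) (hν : IsHaarOrthogonal ν) (i : Fin n) (j : Fin k) :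
    ν {O | √(8 * μc * log n / n) < |(Y * O) i j|} ≤ ENNReal.ofReal (exp (-(4 * log n))) := by
  have hn0 : (0 : ℝ) < n := by positivity
  have hlog : log 2 ≤ log n := log_le_log two_pos (by exact_mod_cast hn)
  have hlog0 : 0 < log n := (log_pos one_lt_two).trans_le hlog
  have := hν.prob
  obtain ⟨m, rfl⟩ : ∃ m, k = m + 1 := ⟨k - 1, by have := j.pos; omega⟩
  let y : EuclideanSpace ℝ (Fin (m + 1)) := WithLp.toLp 2 (Y i)
  have hy2 : ‖y‖ ^ 2 = ∑ l, Y i l ^ 2 := by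
    rw [EuclideanSpace.real_norm_sq_eq]
  have hinner : ∀ O, (Y * O) i j = ⟪y, euclideanCol j O⟫ := fun O => by
    simp [y, euclideanCol, Matrix.mul_apply, PiLp.inner_apply, mul_comm]
  have hrow : (n : ℝ) / (m + 1 : ℕ) * ‖y‖ ^ 2 ≤ μc := by
    have := le_ciSup (f := fun i : Fin n =>
      ((n : ℝ) / (Fintype.card (Fin (m + 1)))) * ∑ j, (Y i j) ^ 2) (Set.finite_range _).bddAbove i
    rw [hy2]
    simpa using this.trans hμ
  set x : ℝ := 8 * log n / (m + 1 : ℕ) with hx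
  have hx0 : 0 < x := by positivity
  have hthr : √x * ‖y‖ ≤ √(8 * μc * log n / n) := by
    rw [← sqrt_sq (norm_nonneg y), ← sqrt_mul hx0.le]
    refine sqrt_le_sqrt ?_
    rw [le_div_iff₀ hn0]
    calc x * ‖y‖ ^ 2 * n = 8 * log n * ((n : ℝ) / (m + 1 : ℕ) * ‖y‖ ^ 2) := by
          rw [hx]; field_simp
      _ ≤ 8 * log n * μc := by gcongr
      _ = _ := by ring
  have hsub : {O | √(8 * μc * log n / n) < |(Y * O) i j|} ⊆
      euclideanCol j ⁻¹' {u | √x * ‖y‖ < |⟪y, u⟫|} := fun O hO => by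
    have hO' : √(8 * μc * log n / n) < |(Y * O) i j| := hO
    rw [hinner] at hO'
    exact hthr.trans_lt hO'
  have hunit : ∀ᵐ u ∂(ν.map (euclideanCol j)), ‖u‖ = 1 := by
    rw [ae_map_iff (measurable_euclideanCol j).aemeasurable
      (measurableSet_eq_fun (by fun_prop) (by fun_prop))]
    filter_upwards [hν.orth] with O hO using norm_euclideanCol j O hO
  have := Measure.isProbabilityMeasure_map (μ := ν) (measurable_euclideanCol j).aemeasurable
  refine (measure_mono hsub).trans ?_
  rw [← Measure.map_apply (measurable_euclideanCol j)
    (measurableSet_lt (by fun_prop) (by fun_prop))]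
  -- if `x ≥ 1` the threshold exceeds the Cauchy-Schwarz bound for `⟪y, u⟫`
  rcases le_or_gt 1 x with h1 | h1
  · refine le_of_eq_of_le (measure_eq_zero_iff_ae_notMem.2 ?_) zero_le
    filter_upwards [hunit] with u hu hmem
    have hmem' : √x * ‖y‖ < |⟪y, u⟫| := hmem
    have hcs := abs_real_inner_le_norm y u
    rw [hu, mul_one] at hcs
    have : 1 ≤ √x := one_le_sqrt.2 h1
    nlinarith [norm_nonneg y]
  · rcases eq_or_ne y 0 with hy | hy
    · simp [hy]
    · refine (cap_le m _ hunit (map_euclideanCol_invariant ν hν j) _ (sqrt_nonneg x)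
        (by rw [sqrt_lt' one_pos]; linarith) y hy).trans (ENNReal.ofReal_le_ofReal ?_)
      rw [sq_sqrt hx0.le]
      exact sqrt_one_sub_pow_le m _ x hlog hx h1

/-- **Random rotation flattens an incoherent basis.**
If `Y ∈ ℝ^{n×k}` is orthonormal with coherence `μ(Y) ≤ μ` and `O` is a Haar-random
orthogonal `k × k` matrix, then
`Pr{ max_{i,j} |(YO)_{ij}| > √(8 μ log(n)/n) } ≤ 1/n²`. -/
theorem random_rotation_flattens
    {n k : ℕ} (Y : Matrix (Fin n) (Fin k) ℝ) (hY : Yᵀ * Y = 1)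
    (μc : ℝ) (hμ : coher Y ≤ μc)
    (ν : Measure (Matrix (Fin k) (Fin k) ℝ)) (hν : IsHaarOrthogonal ν) :
    ν {O | ∃ (i : Fin n) (j : Fin k),
        Real.sqrt (8 * μc * Real.log n / n) < |(Y * O) i j|} ≤
      ENNReal.ofReal (1 / (n : ℝ)^2) := by
  have := hν.prob
  rcases Nat.lt_or_ge n 2 with hn | hn
    -- for `n = 0` there is no entry (and `1 / 0 = 0`); for `n = 1` the bound is trivial
  · interval_cases n
    · simp
    · simpa using prob_le_one
  have hk := card_le_of_orthonormal Y hY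
  have hn0 : (0 : ℝ) < n := by positivity
  calc _ ≤ ν (⋃ i : Fin n, ⋃ j : Fin k, {O | √(8 * μc * log n / n) < |(Y * O) i j|}) :=
        by
          refine measure_mono fun O hO => ?_
          obtain ⟨i, j, h⟩ := hO
          exact Set.mem_iUnion₂.2 ⟨i, j, h⟩
    _ ≤ ∑ _i : Fin n, ∑ _j : Fin k, ENNReal.ofReal (exp (-(4 * log n))) :=
        (measure_iUnion_fintype_le _ _).trans <| Finset.sum_le_sum fun i _ =>
          (measure_iUnion_fintype_le _ _).trans <| Finset.sum_le_sum fun j _ =>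
            entry_tail hn Y μc hμ ν hν i j
    _ = ENNReal.ofReal (n * (k * exp (-(4 * log n)))) := by
        rw [ENNReal.ofReal_mul hn0.le, ENNReal.ofReal_mul (Nat.cast_nonneg k)]
        simp
    _ ≤ ENNReal.ofReal (1 / (n : ℝ) ^ 2) := by
        refine ENNReal.ofReal_le_ofReal ?_
        have he : exp (-(4 * log n)) = ((n : ℝ) ^ 4)⁻¹ := by
          rw [Real.exp_neg, mul_comm, exp_mul, exp_log hn0]; norm_cast
        have hk' : (k : ℝ) ≤ n := by exact_mod_cast hk
        calc n * (k * exp (-(4 * log n))) ≤ n * (n * exp (-(4 * log n))) := by gcongr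
          _ = 1 / (n : ℝ) ^ 2 := by rw [he]; field_simp
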